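/- arXiv:1103.4068 — 6 statements merged into one kernel-verified Lean document; each statement's English description precedes it below -/
import Mathlib

section
/- For every positive integer n, the sum over all binary trees T with n vertices of 1/(∏_{h ∈ H(T)} h·2^{h-1}) equals 1/n!, where H(T) is the multiset of hook lengths of T. -/
/-!
A nonempty tree is a root together with an ordered pair of subtrees, so the weighted sums
`S n = ∑_{T ∈ B_n} ∏_{h ∈ H(T)} 1 / (h 2^(h-1))` satisfy `S 0 = 1` and
`S (n+1) = 1 / ((n+1) 2^n) * ∑_{i+j=n} S i * S j`. The sequence `1 / n!` satisfies the same
recurrence, since `∑_{i+j=n} 1 / (i! j!) = 2^n / n!` by the binomial theorem.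
-/

/-- A binary tree: every vertex has an ordered pair of (possibly empty) subtrees.
`leaf` denotes the empty tree. -/
inductive BinTree : Type
  | leaf : BinTree
  | node : BinTree → BinTree → BinTree

namespace BinTree

/-- The number of vertices of a binary tree. -/
def count : BinTree → ℕ
  | leaf => 0
  | node l r => count l + count r + 1

/-- The multiset of hook lengths of a binary tree: the hook length of a vertex
is the number of vertices of the subtree rooted at that vertex. -/
def hooks : BinTree → Multiset ℕ
  | leaf => 0
  | node l r => (count l + count r + 1) ::ₘ (hooks l + hooks r)

end BinTree

namespace BinTree

/-- The weight `1 / ∏_{h ∈ H(T)} (h · 2^(h-1))` of a binary tree. -/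
def weight (T : BinTree) : ℚ :=
  (1 : ℚ) / ((BinTree.hooks T).map fun h : ℕ => (h : ℚ) * (2 : ℚ) ^ (h - 1)).prod

theorem weight_leaf : weight leaf = 1 := by
  simp [weight, hooks]

theorem weight_node {l r : BinTree} {n : ℕ} (h : l.count + r.count = n) :
    weight (node l r) = 1 / (((n : ℚ) + 1) * 2 ^ n) * (weight l * weight r) := by
  subst h
  simp [weight, hooks, mul_comm, mul_left_comm]

theorem sum_antidiagonal_inv_factorial (n : ℕ) :
    ∑ p ∈ Finset.HasAntidiagonal.antidiagonal n, (1 / (p.1.factorial : ℚ)) * (1 / (p.2.factorial : ℚ))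
      = 2 ^ n / n.factorial := by
  have h : ∑ p ∈ Finset.HasAntidiagonal.antidiagonal n, (n.choose p.1 : ℚ) = 2 ^ n := by
    rw [Finset.Nat.sum_antidiagonal_eq_sum_range_succ_mk]
    exact_mod_cast Nat.sum_range_choose n
  rw [← h, Finset.sum_div]
  refine Finset.sum_congr rfl fun p hp => ?_
  obtain rfl := Finset.HasAntidiagonal.mem_antidiagonal.mp hp
  rw [Nat.cast_add_choose]
  field_simp

/-- The trees with `n` vertices form a finite set of total weight `1 / n!`. The case `n = 0`
is included because empty subtrees occur in the recurrence. -/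
theorem exists_finset_sum_weight (n : ℕ) :
    ∃ s : Finset BinTree, (∀ T, T ∈ s ↔ T.count = n) ∧
      ∑ T ∈ s, weight T = 1 / n.factorial := by
  classical
  induction n using Nat.strong_induction_on with
  | _ n ih =>
  cases n with
  | zero =>
    refine ⟨{leaf}, fun T => ?_, by simp [weight_leaf]⟩
    cases T <;> simp [count]
  | succ n =>
    choose! s hmem hsum using ih
    refine ⟨((Finset.HasAntidiagonal.antidiagonal n).sigma fun p => s p.1 ×ˢ s p.2).image
      fun x => node x.2.1 x.2.2, fun T => ?_, ?_⟩
    · constructor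
      · intro hT
        obtain ⟨⟨⟨i, j⟩, l, r⟩, hx, rfl⟩ := Finset.mem_image.mp hT
        simp only [Finset.mem_sigma, Finset.HasAntidiagonal.mem_antidiagonal, Finset.mem_product] at hx
        obtain ⟨hij, hl, hr⟩ := hx
        rw [hmem i (by omega)] at hl
        rw [hmem j (by omega)] at hr
        simp only [count]
        omega
      · intro hT
        cases T with
        | leaf => simp [count] at hT
        | node l r =>
          simp only [count] at hT
          refine Finset.mem_image.mpr ⟨⟨(l.count, r.count), (l, r)⟩, ?_, rfl⟩
          simp only [Finset.mem_sigma, Finset.HasAntidiagonal.mem_antidiagonal, Finset.mem_product]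
          exact ⟨by omega, (hmem _ (by omega) _).mpr rfl, (hmem _ (by omega) _).mpr rfl⟩
    · rw [Finset.sum_image, Finset.sum_sigma]
      · have key : ∀ p ∈ Finset.HasAntidiagonal.antidiagonal n,
            ∑ x ∈ s p.1 ×ˢ s p.2, weight (node x.1 x.2) =
              1 / (((n : ℚ) + 1) * 2 ^ n) *
                ((1 / (p.1.factorial : ℚ)) * (1 / (p.2.factorial : ℚ))) := by
          rintro ⟨i, j⟩ hp
          have hij : i + j = n := Finset.HasAntidiagonal.mem_antidiagonal.mp hp
          rw [← hsum i (by omega), ← hsum j (by omega), Finset.sum_mul_sum,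
            ← Finset.sum_product', Finset.mul_sum]
          refine Finset.sum_congr rfl fun x hx => weight_node ?_
          rw [Finset.mem_product] at hx
          rw [(hmem i (by omega) _).mp hx.1, (hmem j (by omega) _).mp hx.2, hij]
        rw [Finset.sum_congr rfl key, ← Finset.mul_sum, sum_antidiagonal_inv_factorial,
          Nat.factorial_succ]
        push_cast
        field_simp
      · -- The index pair is recovered from the vertex counts of the two subtrees.
        rintro ⟨⟨i, j⟩, l, r⟩ hx ⟨⟨i', j'⟩, l', r'⟩ hx' h
        simp only [Finset.mem_coe, Finset.mem_sigma, Finset.HasAntidiagonal.mem_antidiagonal,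
          Finset.mem_product] at hx hx'
        obtain ⟨hij, hl, hr⟩ := hx
        obtain ⟨hij', hl', hr'⟩ := hx'
        rw [hmem _ (by omega)] at hl hr hl' hr'
        simp only [node.injEq] at h
        obtain ⟨rfl, rfl⟩ := h
        subst hl hr hl' hr'
        rfl

end BinTree

/-- Han's first hook length formula: for every positive integer `n`,
`∑_{T ∈ B_n} 1 / ∏_{h ∈ H(T)} (h · 2^(h-1)) = 1 / n!`. -/
theorem han_first_formula (n : ℕ) (hn : 0 < n) :
    ∑ᶠ T ∈ {T : BinTree | T.count = n},
      (1 : ℚ) / ((BinTree.hooks T).map fun h : ℕ => (h : ℚ) * (2 : ℚ) ^ (h - 1)).prod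
      = 1 / n.factorial := by
  obtain ⟨s, hs, hsum⟩ := BinTree.exists_finset_sum_weight n
  have hset : {T : BinTree | T.count = n} = (s : Set BinTree) := by
    ext T
    simp [hs]
  rw [hset, ← hsum]
  exact finsum_mem_coe_finset BinTree.weight s
end

section
/- For all positive integers n and k, the sum over all k-ary trees T with n vertices of ∏_{h ∈ H(T)} 1/(h·k^{h-1}) equals 1/n!, where H(T) is the multiset of hook lengths of T. -/
/-!
Write `S n` for the sum in question, with `S 0 = 1` for the empty tree. A nonempty tree is a root
with a `k`-tuple of subtrees, and the root of a tree with `n + 1` vertices has weight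
`1 / ((n + 1) k ^ n)`, so
`S (n + 1) = 1 / ((n + 1) k ^ n) * ∑_{a₁ + ⋯ + aₖ = n} ∏ᵢ S (aᵢ)` (`sum_hookWeight_succ`).
By strong induction `S (aᵢ) = 1 / aᵢ!`, and the multinomial theorem gives
`∑_{a₁ + ⋯ + aₖ = n} ∏ᵢ 1 / aᵢ! = k ^ n / n!` (`sum_prod_inv_factorial`),
whence `S (n + 1) = 1 / (n + 1)!`.
-/

/-- A `k`-ary tree: every vertex has exactly `k` subtrees in linear order,
each possibly empty.  `nil` denotes the empty tree. -/
inductive KTree (k : ℕ) : Type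
  | nil : KTree k
  | node : (Fin k → KTree k) → KTree k

namespace KTree

variable {k : ℕ}

/-- The number of vertices of a `k`-ary tree. -/
def count : KTree k → ℕ
  | nil => 0
  | node c => 1 + ∑ i, count (c i)

/-- The multiset of hook lengths of a `k`-ary tree: the hook length of a vertex
is the number of vertices of the subtree rooted at that vertex. -/
def hooks : KTree k → Multiset ℕ
  | nil => 0
  | node c => count (node c) ::ₘ ∑ i, hooks (c i)

end KTree

namespace KTree

variable {k : ℕ}

/-- The weight `∏_{h ∈ H(T)} 1 / (h k ^ (h - 1))` of a tree. -/
def hookWeight (T : KTree k) : ℚ :=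
  (T.hooks.map fun h : ℕ => 1 / ((h : ℚ) * (k : ℚ) ^ (h - 1))).prod

lemma hookWeight_nil : hookWeight (nil : KTree k) = 1 := by
  simp [hookWeight, hooks]

lemma hookWeight_node (c : Fin k → KTree k) :
    hookWeight (node c) =
      1 / (((∑ i, (c i).count + 1 : ℕ) : ℚ) * (k : ℚ) ^ (∑ i, (c i).count)) *
        ∏ i, hookWeight (c i) := by
  have h : ∀ s : Finset (Fin k), ∀ f : ℕ → ℚ,
      ((∑ i ∈ s, hooks (c i)).map f).prod = ∏ i ∈ s, ((hooks (c i)).map f).prod := by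
    intro s f
    induction s using Finset.cons_induction with
    | empty => simp
    | cons a s ha ih => rw [Finset.sum_cons, Finset.prod_cons, Multiset.map_add, Multiset.prod_add, ih]
  simp only [hookWeight, hooks, count, Multiset.map_cons, Multiset.prod_cons, h]
  rw [add_comm 1, Nat.add_sub_cancel]

lemma finite_count_eq (n : ℕ) : {T : KTree k | T.count = n}.Finite := by
  induction n using Nat.strong_induction_on with
  | _ n ih =>
    have hfin : (⋃ m ∈ Set.Iio n, {T : KTree k | T.count = m}).Finite :=
      (Set.finite_Iio n).biUnion fun m hm => ih m hm
    refine (((Set.Finite.pi' fun _ : Fin k => hfin).image node).insert nil).subset ?_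
    rintro (_ | c) hT
    · exact Set.mem_insert _ _
    · refine Set.mem_insert_of_mem _ ⟨c, fun i => ?_, rfl⟩
      have hi : (c i).count ≤ ∑ j, (c j).count :=
        Finset.single_le_sum (f := fun j => (c j).count) (fun _ _ => Nat.zero_le _)
          (Finset.mem_univ i)
      simp only [Set.mem_ofPred_eq, count] at hT
      simp only [Set.mem_iUnion, Set.mem_Iio, Set.mem_ofPred_eq, exists_prop, exists_eq_right']
      omega

/-- The finite set of `k`-ary trees with `n` vertices. -/
noncomputable def trees (k n : ℕ) : Finset (KTree k) := (finite_count_eq n).toFinset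

lemma mem_trees {n : ℕ} {T : KTree k} : T ∈ trees k n ↔ T.count = n := by
  simp [trees]

lemma trees_zero : trees k 0 = {nil} := by
  ext T
  cases T <;> simp [mem_trees, count]

/-- Decomposition at the root, with the tuples of subtrees grouped by their sizes. -/
lemma sum_hookWeight_succ (k n : ℕ) :
    ∑ T ∈ trees k (n + 1), hookWeight T =
      1 / (((n + 1 : ℕ) : ℚ) * (k : ℚ) ^ n) *
        ∑ a ∈ Finset.univ.piAntidiag n, ∏ i : Fin k, ∑ T ∈ trees k (a i), hookWeight T := by
  classical
  simp only [Finset.prod_univ_sum]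
  rw [Finset.sum_sigma', Finset.mul_sum]
  symm
  refine Finset.sum_bij (fun p _ => node p.2) ?_ ?_ ?_ ?_
  · rintro ⟨a, c⟩ h
    simp only [Finset.mem_sigma, Finset.mem_piAntidiag, Fintype.mem_piFinset, mem_trees] at h
    simp [mem_trees, count, h.2, h.1.1, add_comm]
  · rintro ⟨a, c⟩ h ⟨a', c'⟩ h' e
    simp only [Finset.mem_sigma, Fintype.mem_piFinset, mem_trees] at h h'
    obtain rfl : c = c' := by simpa using e
    obtain rfl : a = a' := funext fun i => (h.2 i).symm.trans (h'.2 i)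
    rfl
  · rintro (_ | c) h
    · simp [mem_trees, count] at h
    · refine ⟨⟨fun i => (c i).count, c⟩, ?_, rfl⟩
      simp only [mem_trees, count] at h
      simp only [Finset.mem_sigma, Finset.mem_piAntidiag, Fintype.mem_piFinset, mem_trees]
      exact ⟨⟨by omega, by simp⟩, fun _ => trivial⟩
  · rintro ⟨a, c⟩ h
    simp only [Finset.mem_sigma, Finset.mem_piAntidiag, Fintype.mem_piFinset, mem_trees] at h
    rw [hookWeight_node]
    simp only [h.2, h.1.1]

/-- The multinomial theorem for `(1 + ⋯ + 1) ^ n`, divided by `n!`. -/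
lemma sum_prod_inv_factorial (k n : ℕ) :
    ∑ a ∈ Finset.univ.piAntidiag n, ∏ i : Fin k, (1 / ((a i).factorial : ℚ)) =
      (k : ℚ) ^ n / n.factorial := by
  have h := Finset.sum_pow_eq_sum_piAntidiag (Finset.univ : Finset (Fin k)) (fun _ => (1 : ℚ)) n
  simp only [Finset.sum_const, Finset.card_univ, Fintype.card_fin, nsmul_eq_mul, mul_one, one_pow,
    Finset.prod_const_one] at h
  rw [h, Finset.sum_div]
  refine Finset.sum_congr rfl fun a ha => ?_
  have hs := Nat.multinomial_spec (Finset.univ : Finset (Fin k)) a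
  rw [(Finset.mem_piAntidiag.1 ha).1] at hs
  have hp : (∏ i, ((a i).factorial : ℚ)) ≠ 0 :=
    Finset.prod_ne_zero_iff.2 fun i _ => by exact_mod_cast (a i).factorial_ne_zero
  have hn : (n.factorial : ℚ) ≠ 0 := by exact_mod_cast n.factorial_ne_zero
  have hs' : (∏ i, ((a i).factorial : ℚ)) * Nat.multinomial Finset.univ a = n.factorial := by
    exact_mod_cast hs
  rw [Finset.prod_div_distrib, Finset.prod_const_one, div_eq_div_iff hp hn, ← hs']
  ring

lemma sum_hookWeight (hk : 0 < k) (n : ℕ) :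
    ∑ T ∈ trees k n, hookWeight T = 1 / n.factorial := by
  induction n using Nat.strong_induction_on with
  | _ n ih =>
    cases n with
    | zero => simp [trees_zero, hookWeight_nil]
    | succ n =>
      have hS : ∀ a ∈ Finset.univ.piAntidiag n,
          ∏ i : Fin k, ∑ T ∈ trees k (a i), hookWeight T =
            ∏ i : Fin k, (1 / ((a i).factorial : ℚ)) := by
        intro a ha
        refine Finset.prod_congr rfl fun i _ => ih (a i) ?_
        have hi : a i ≤ ∑ j, a j :=
          Finset.single_le_sum (fun _ _ => Nat.zero_le _) (Finset.mem_univ i)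
        rw [(Finset.mem_piAntidiag.1 ha).1] at hi
        omega
      have hk' : (k : ℚ) ≠ 0 := by exact_mod_cast hk.ne'
      have hn : (n.factorial : ℚ) ≠ 0 := by exact_mod_cast n.factorial_ne_zero
      rw [sum_hookWeight_succ, Finset.sum_congr rfl hS, sum_prod_inv_factorial,
        Nat.factorial_succ]
      push_cast
      field_simp

end KTree

/-- Yang's hook length formula for `k`-ary trees: for all positive integers `n`
and `k`, `∑_T ∏_{h ∈ H(T)} 1 / (h · k^(h-1)) = 1 / n!`, the sum being over all
`k`-ary trees with `n` vertices. -/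
theorem yang_formula (n k : ℕ) (hn : 0 < n) (hk : 0 < k) :
    ∑ᶠ T ∈ {T : KTree k | T.count = n},
      ((KTree.hooks T).map fun h : ℕ => 1 / ((h : ℚ) * (k : ℚ) ^ (h - 1))).prod
      = 1 / n.factorial := by
  rw [finsum_mem_eq_finite_toFinset_sum _ (KTree.finite_count_eq n)]
  exact KTree.sum_hookWeight hk n
end

section
/- Fix positive integers n and k, a k-ary tree T with n vertices, and an increasing labeling of T assigning to each vertex u a label i(u) ∈ {0,1,…,n−1} bijectively with the root labeled 0 and labels increasing along root-to-leaf paths. Then the number of staircase labelings of T in which the vertex labeled i receives a vector of length i equals k^{(1+2+⋯+n) − Σ_{u ∈ T} f_u}, where f_u is the number of vertices on the path from the root to u. -/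
namespace KTree

variable {k : ℕ}

/-- The multiset of the values `f_u` over all vertices `u`, where `f_u` is the
number of vertices on the path from the root to `u` (including both
endpoints, so the root contributes `1`). -/
def fvals : KTree k → Multiset ℕ
  | nil => 0
  | node c => 1 ::ₘ ∑ i, (fvals (c i)).map (· + 1)

/-- The subtree of a `k`-ary tree at position `p`, a list of child indices. -/
def sub : KTree k → List (Fin k) → KTree k
  | t, [] => t
  | nil, _ :: _ => nil
  | node c, i :: p => sub (c i) p

/-- A `k`-ary tree is complete if every internal vertex has either all of its
`k` subtrees empty or all of them nonempty. -/
def IsComplete : KTree k → Prop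
  | nil => True
  | node c => ((∀ i, c i = nil) ∨ (∀ i, c i ≠ nil)) ∧ ∀ i, IsComplete (c i)

end KTree

/-- A staircase labeling of a `k`-ary tree `T` with `n` vertices: each vertex
(identified with its position, a list of child indices) receives a vector over
`[k]` (represented by `Fin k`); the labels are `C_0, C_1, …, C_{n-1}` where
`C_i` has length `i` (equivalently, the label lengths are distinct and `< n`);
along any path from the root to a leaf the label lengths strictly increase;
and whenever a vertex `u` labeled by a vector of length `i` has a descendant
`v` reached through the `r`-th child of `u`, the `(i+1)`-st entry of the label
of `v` equals `r`. -/
structure Staircase (k n : ℕ) (T : KTree k) where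
  lab : {p : List (Fin k) // T.sub p ≠ KTree.nil} → List (Fin k)
  length_lt : ∀ p, (lab p).length < n
  length_inj : Function.Injective fun p => (lab p).length
  length_mono : ∀ (p : List (Fin k)) (i : Fin k) (hp : T.sub p ≠ KTree.nil)
    (hpi : T.sub (p ++ [i]) ≠ KTree.nil),
    (lab ⟨p, hp⟩).length < (lab ⟨p ++ [i], hpi⟩).length
  entry_eq : ∀ (p q : List (Fin k)) (r : Fin k) (hp : T.sub p ≠ KTree.nil)
    (hq : T.sub (p ++ r :: q) ≠ KTree.nil),
    (lab ⟨p ++ r :: q, hq⟩)[(lab ⟨p, hp⟩).length]? = some r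

namespace KTree

variable {k : ℕ}

/-- The finite set of positions of the vertices of a `k`-ary tree. -/
def positions : KTree k → Finset (List (Fin k))
  | nil => ∅
  | node c => insert [] (Finset.univ.biUnion fun i => (positions (c i)).image (List.cons i))

lemma mem_positions (T : KTree k) (p : List (Fin k)) : p ∈ T.positions ↔ T.sub p ≠ nil := by
  induction T generalizing p with
  | nil => cases p <;> simp [positions, sub]
  | node c ih => cases p <;> simp [positions, sub, ih]

lemma sum_positions_node (c : Fin k → KTree k) (g : List (Fin k) → ℕ) :
    ∑ p ∈ (node c).positions, g p = g [] + ∑ i, ∑ p ∈ (c i).positions, g (i :: p) := by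
  rw [positions, Finset.sum_insert (by simp), Finset.sum_biUnion]
  · congr 1
    refine Finset.sum_congr rfl fun i _ => ?_
    rw [Finset.sum_image (by simp)]
  · intro i _ j _ hij
    rw [Function.onFun, Finset.disjoint_left]
    intro p hp hq
    obtain ⟨a, -, rfl⟩ := Finset.mem_image.1 hp
    obtain ⟨b, -, hb⟩ := Finset.mem_image.1 hq
    simp_all

lemma card_positions (T : KTree k) : T.positions.card = T.count := by
  rw [Finset.card_eq_sum_ones]
  induction T with
  | nil => simp [positions, count]
  | node c ih => rw [sum_positions_node]; simp only [count, ih]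

lemma sum_map_add_one (s : Multiset ℕ) : (s.map (· + 1)).sum = s.sum + s.card := by
  simp [Multiset.sum_map_add]

lemma card_fvals (T : KTree k) : Multiset.card T.fvals = T.count := by
  induction T with
  | nil => simp [fvals, count]
  | node c ih => simp [fvals, count, ih, add_comm]

/-- The value `f_u` of the vertex `u` at position `p` is `|p| + 1`. -/
lemma sum_fvals (T : KTree k) : T.fvals.sum = ∑ p ∈ T.positions, (p.length + 1) := by
  induction T with
  | nil => simp [positions, fvals]
  | node c ih =>
    rw [sum_positions_node, fvals, Multiset.sum_cons, Multiset.sum_sum]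
    simp only [sum_map_add_one, ih, card_fvals, ← card_positions, List.length_nil,
      List.length_cons, Finset.sum_add_distrib, Finset.card_eq_sum_ones]

lemma sub_append (T : KTree k) (p q : List (Fin k)) : T.sub (p ++ q) = (T.sub p).sub q := by
  induction p generalizing T with
  | nil => simp [sub]
  | cons i p ih =>
    cases T with
    | nil => cases q <;> simp [sub]
    | node c => simp [sub, ih]

lemma sub_ne_nil_of_append {T : KTree k} {p q : List (Fin k)} (h : T.sub (p ++ q) ≠ nil) :
    T.sub p ≠ nil := by
  intro hp
  apply h
  rw [sub_append, hp]
  cases q <;> rfl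

lemma sub_take_ne_nil {T : KTree k} {p : List (Fin k)} (h : T.sub p ≠ nil) (j : ℕ) :
    T.sub (p.take j) ≠ nil :=
  sub_ne_nil_of_append (q := p.drop j) (by rwa [List.take_append_drop])

/-- A labeling that increases from parent to child increases from each vertex to each of its
proper descendants. -/
lemma label_lt_append {T : KTree k} {ℓ : {p : List (Fin k) // T.sub p ≠ nil} → ℕ}
    (hmono : ∀ (p : List (Fin k)) (i : Fin k) (hp : T.sub p ≠ nil)
      (hpi : T.sub (p ++ [i]) ≠ nil), ℓ ⟨p, hp⟩ < ℓ ⟨p ++ [i], hpi⟩)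
    (p q : List (Fin k)) (hq : q ≠ []) (hp : T.sub p ≠ nil) (hpq : T.sub (p ++ q) ≠ nil) :
    ℓ ⟨p, hp⟩ < ℓ ⟨p ++ q, hpq⟩ := by
  induction q generalizing p with
  | nil => exact absurd rfl hq
  | cons i q ih =>
    have e : p ++ i :: q = (p ++ [i]) ++ q := by simp
    have hpi : T.sub (p ++ [i]) ≠ nil := sub_ne_nil_of_append (q := q) (by rwa [← e])
    have h1 := hmono p i hp hpi
    by_cases hq' : q = []
    · subst hq'; exact h1
    · have h2 := ih (p ++ [i]) hq' hpi (by rwa [← e])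
      simp only [← e] at h2
      exact h1.trans h2

lemma label_take_lt {T : KTree k} {ℓ : {p : List (Fin k) // T.sub p ≠ nil} → ℕ}
    (hmono : ∀ (p : List (Fin k)) (i : Fin k) (hp : T.sub p ≠ nil)
      (hpi : T.sub (p ++ [i]) ≠ nil), ℓ ⟨p, hp⟩ < ℓ ⟨p ++ [i], hpi⟩)
    (v : {p : List (Fin k) // T.sub p ≠ nil}) (j : ℕ) (hj : j < v.1.length) :
    ℓ ⟨v.1.take j, sub_take_ne_nil v.2 j⟩ < ℓ v := by
  have h := label_lt_append hmono (v.1.take j) (v.1.drop j) (by simpa using hj)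
    (sub_take_ne_nil v.2 j) (by rw [List.take_append_drop]; exact v.2)
  simpa only [List.take_append_drop] using h

/-- The label `w` is admissible at the vertex `v`: it has length `ℓ v`, and its entry at index
`ℓ u` is `r` whenever `v` is reached through the `r`-th child of `u`. -/
def Admissible {T : KTree k} (ℓ : {p : List (Fin k) // T.sub p ≠ nil} → ℕ)
    (v : {p : List (Fin k) // T.sub p ≠ nil}) (w : List (Fin k)) : Prop :=
  w.length = ℓ v ∧ ∀ (p q : List (Fin k)) (r : Fin k) (hp : T.sub p ≠ nil),
    v.1 = p ++ r :: q → w[ℓ ⟨p, hp⟩]? = some r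

lemma admissible_iff {T : KTree k} (ℓ : {p : List (Fin k) // T.sub p ≠ nil} → ℕ)
    (v : {p : List (Fin k) // T.sub p ≠ nil}) (w : List (Fin k)) :
    Admissible ℓ v w ↔ w.length = ℓ v ∧ ∀ j : Fin v.1.length,
      w[ℓ ⟨v.1.take j, sub_take_ne_nil v.2 j⟩]? = some v.1[j] := by
  refine and_congr_right fun _ => ⟨fun h j => ?_, fun h p q r hp e => ?_⟩
  · exact h _ (v.1.drop (j + 1)) _ _ (by simp)
  · obtain ⟨v, hv⟩ := v
    dsimp only at e
    subst e
    simpa using h ⟨p.length, by simp⟩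

end KTree

/-- The number of words of length `m` over `[k]` in which `d` distinct entries are prescribed. -/
lemma card_fun_prescribed {k m d : ℕ} (a : Fin d → Fin m) (ha : Function.Injective a)
    (b : Fin d → Fin k) :
    Nat.card {w : Fin m → Fin k // ∀ j, w (a j) = b j} = k ^ (m - d) := by
  classical
  let x₀ : {x // x ∈ Set.range a} → Fin k := fun x => b x.2.choose
  have e : ∀ w : Fin m → Fin k, (∀ j, w (a j) = b j) ↔ w ∘ Subtype.val = x₀ := by
    intro w
    constructor
    · intro h
      funext x
      have hx := x.2.choose_spec
      simp only [Function.comp, x₀]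
      rw [← h, hx]
    · intro h j
      have hj := congrFun h ⟨a j, j, rfl⟩
      have hx := (⟨j, rfl⟩ : a j ∈ Set.range a).choose_spec
      simp only [Function.comp, x₀] at hj
      rw [hj]
      exact congrArg b (ha hx)
  rw [Nat.card_congr ((Equiv.subtypeEquivRight e).trans (Equiv.subtypePreimage _ x₀)),
    Nat.card_fun, Nat.card_fin, Nat.card_eq_fintype_card, Fintype.card_subtype_compl,
    Fintype.card_fin]
  congr 2
  have := Fintype.card_congr (Equiv.ofInjective a ha)
  rw [Fintype.card_fin] at this
  exact (Fintype.card_congr (Equiv.refl _)).trans this.symm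

/-- There are `k ^ (ℓ v - |v|)` admissible labels at the vertex `v`. -/
lemma card_admissible {k : ℕ} {T : KTree k} {ℓ : {p : List (Fin k) // T.sub p ≠ KTree.nil} → ℕ}
    (hinj : Function.Injective ℓ)
    (hmono : ∀ (p : List (Fin k)) (i : Fin k) (hp : T.sub p ≠ KTree.nil)
      (hpi : T.sub (p ++ [i]) ≠ KTree.nil), ℓ ⟨p, hp⟩ < ℓ ⟨p ++ [i], hpi⟩)
    (v : {p : List (Fin k) // T.sub p ≠ KTree.nil}) :
    Nat.card {w // KTree.Admissible ℓ v w} = k ^ (ℓ v - v.1.length) := by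
  let a : Fin v.1.length → Fin (ℓ v) := fun j =>
    ⟨ℓ ⟨v.1.take j, KTree.sub_take_ne_nil v.2 j⟩, KTree.label_take_lt hmono v j j.2⟩
  have ha : Function.Injective a := by
    intro i j hij
    have h1 := congrArg (fun x => x.1.length) (hinj (Fin.mk.inj hij))
    simp only [List.length_take] at h1
    ext
    omega
  rw [← card_fun_prescribed a ha fun j => v.1[j]]
  refine Nat.card_congr ⟨fun w => ⟨fun i => w.1[i.1]'(by rw [w.2.1]; exact i.2), fun j => ?_⟩,
    fun f => ⟨List.ofFn f.1, ?_⟩, fun w => ?_, fun f => ?_⟩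
  · have h := ((KTree.admissible_iff ℓ v w.1).1 w.2).2 j
    exact (List.getElem?_eq_some_iff.1 h).2
  · refine (KTree.admissible_iff ℓ v _).2 ⟨by simp, fun j => ?_⟩
    have h := f.2 j
    rw [List.getElem?_eq_some_iff]
    refine ⟨by rw [List.length_ofFn]; exact (a j).2, ?_⟩
    rw [List.getElem_ofFn]
    exact h
  · ext1
    refine List.ext_getElem (by simp [w.2.1]) fun i h1 h2 => ?_
    simp
  · ext i
    simp

/-- Staircase labelings with prescribed lengths are independent choices of an admissible label at
each vertex. -/
def staircaseEquiv {n k : ℕ} {T : KTree k} {ℓ : {p : List (Fin k) // T.sub p ≠ KTree.nil} → ℕ}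
    (hlt : ∀ p, ℓ p < n) (hinj : Function.Injective ℓ)
    (hmono : ∀ (p : List (Fin k)) (i : Fin k) (hp : T.sub p ≠ KTree.nil)
      (hpi : T.sub (p ++ [i]) ≠ KTree.nil), ℓ ⟨p, hp⟩ < ℓ ⟨p ++ [i], hpi⟩) :
    {L : Staircase k n T // ∀ p, (L.lab p).length = ℓ p} ≃
      ∀ v, {w // KTree.Admissible ℓ v w} where
  toFun L v := ⟨L.1.lab v, L.2 v, by
    intro p q r hp e
    obtain ⟨v, hv⟩ := v
    dsimp only at e
    subst e
    rw [← L.2]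
    exact L.1.entry_eq p q r hp hv⟩
  invFun F := ⟨{
    lab := fun v => (F v).1
    length_lt := fun v => by rw [(F v).2.1]; exact hlt v
    length_inj := fun u v h => by
      apply hinj
      simpa only [(F _).2.1] using h
    length_mono := fun p i hp hpi => by
      rw [(F _).2.1, (F _).2.1]
      exact hmono p i hp hpi
    entry_eq := fun p q r hp hq => by
      rw [(F ⟨p, hp⟩).2.1]
      exact (F ⟨p ++ r :: q, hq⟩).2.2 p q r hp rfl }, fun v => (F v).2.1⟩
  left_inv _ := rfl
  right_inv _ := rfl

/-- Fix a `k`-ary tree `T` with `n` vertices and an increasing labeling of `T`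
assigning to each vertex `u` a label `ℓ u ∈ {0, 1, …, n-1}` bijectively, with
the root labeled `0` and labels increasing along root-to-leaf paths.  Then the
number of staircase labelings of `T` in which the vertex labeled `i` receives
a vector of length `i` equals `k^((1+2+⋯+n) - Σ_{u ∈ T} f_u)`, where `f_u` is
the number of vertices on the path from the root to `u`. -/
theorem card_staircase_labelings_given_increasing (n k : ℕ) (hn : 0 < n)
    (hk : 0 < k) (T : KTree k) (hT : T.count = n)
    (ℓ : {p : List (Fin k) // KTree.sub T p ≠ KTree.nil} → ℕ)
    (hlt : ∀ p, ℓ p < n) (hinj : Function.Injective ℓ)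
    (hroot : ∀ (h : KTree.sub T [] ≠ KTree.nil), ℓ ⟨[], h⟩ = 0)
    (hmono : ∀ (p : List (Fin k)) (i : Fin k) (hp : KTree.sub T p ≠ KTree.nil)
      (hpi : KTree.sub T (p ++ [i]) ≠ KTree.nil),
      ℓ ⟨p, hp⟩ < ℓ ⟨p ++ [i], hpi⟩) :
    Nat.card {L : Staircase k n T // ∀ p, (L.lab p).length = ℓ p}
      = k ^ ((∑ i ∈ Finset.range (n + 1), i) - (KTree.fvals T).sum) := by
  classical
  have e : ∀ p, p ∈ T.positions ↔ T.sub p ≠ KTree.nil := T.mem_positions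
  let _ : Fintype {p : List (Fin k) // KTree.sub T p ≠ KTree.nil} :=
    Fintype.subtype T.positions e
  have hcard : Fintype.card {p : List (Fin k) // KTree.sub T p ≠ KTree.nil} = n := by
    rw [Fintype.card_of_subtype T.positions e, KTree.card_positions, hT]
  have hsum : T.fvals.sum =
      ∑ v : {p : List (Fin k) // KTree.sub T p ≠ KTree.nil}, (v.1.length + 1) := by
    rw [KTree.sum_fvals]
    exact Finset.sum_subtype _ e fun p => p.length + 1
  -- `ℓ` is an injection between sets of size `n`, hence a bijection onto `{0, …, n - 1}`
  have himage : Finset.univ.image ℓ = Finset.range n := by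
    refine Finset.eq_of_subset_of_card_le (fun i hi => ?_) ?_
    · obtain ⟨v, -, rfl⟩ := Finset.mem_image.1 hi
      exact Finset.mem_range.2 (hlt v)
    · rw [Finset.card_image_of_injective _ hinj, Finset.card_univ, hcard, Finset.card_range]
  have hℓ : ∑ i ∈ Finset.range (n + 1), i = ∑ v, (ℓ v + 1) := by
    rw [Finset.sum_range_succ', ← himage, Finset.sum_image fun _ _ _ _ h => hinj h, add_zero]
  -- labels increase strictly along the `|v|` steps from the root to `v`; needed because the
  -- subtractions are truncated
  have hle : ∀ v : {p : List (Fin k) // KTree.sub T p ≠ KTree.nil}, v.1.length ≤ ℓ v := by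
    intro v
    have h : ∀ j, j ≤ v.1.length → j ≤ ℓ ⟨v.1.take j, KTree.sub_take_ne_nil v.2 j⟩ := by
      intro j
      induction j with
      | zero => simp
      | succ j ih =>
        intro hj
        have h1 := KTree.label_take_lt hmono
          ⟨v.1.take (j + 1), KTree.sub_take_ne_nil v.2 (j + 1)⟩ j (by simp; omega)
        have h2 := ih (by omega)
        simp only [List.take_take, Nat.min_eq_left (Nat.le_succ j)] at h1
        omega
    simpa using h _ le_rfl
  rw [Nat.card_congr (staircaseEquiv hlt hinj hmono), Nat.card_pi]
  simp only [card_admissible hinj hmono]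
  rw [Finset.prod_pow_eq_pow_sum, hℓ, hsum,
    ← Finset.sum_tsub_distrib _ fun v _ => Nat.add_le_add_right (hle v) 1]
  simp only [Nat.add_sub_add_right]
end

section
/- For every positive integer n, the sum over all complete binary trees T with 2n+1 vertices of (2n+1)!·2^{1+2+⋯+(2n+1)}/(∏_{h ∈ H(T)} h·2^{h}) equals 2^{1+2+⋯+2n}/2^n, where H(T) is the multiset of hook lengths of T. -/
namespace BinTree

/-- A binary tree is complete if every internal vertex has two empty subtrees
or two nonempty subtrees. -/
def IsComplete : BinTree → Prop
  | leaf => True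
  | node l r => ((l = leaf ∧ r = leaf) ∨ (l ≠ leaf ∧ r ≠ leaf)) ∧
      IsComplete l ∧ IsComplete r

/-- The complete binary tree obtained from a binary tree by attaching a new
leaf vertex at each empty subtree position. -/
def toComplete : BinTree → BinTree
  | leaf => node leaf leaf
  | node l r => node (toComplete l) (toComplete r)

end BinTree

namespace BinTree

open Finset

theorem count_eq_zero {T : BinTree} : T.count = 0 ↔ T = leaf := by
  cases T <;> simp [count]

theorem finite_count_le (n : ℕ) : {T : BinTree | T.count ≤ n}.Finite := by
  induction n with
  | zero =>
    refine (Set.finite_singleton leaf).subset fun T hT => ?_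
    exact count_eq_zero.mp (Nat.le_zero.mp hT)
  | succ n ih =>
    refine ((ih.image2 node ih).insert leaf).subset fun T hT => ?_
    cases T with
    | leaf => exact Set.mem_insert _ _
    | node l r =>
      simp only [Set.mem_ofPred_eq, count] at hT
      refine Set.mem_insert_of_mem _ ⟨l, ?_, r, ?_, rfl⟩ <;> simp only [Set.mem_ofPred_eq] <;> omega

theorem finite_complete (n : ℕ) :
    {T : BinTree | T.count = 2 * n + 1 ∧ T.IsComplete}.Finite :=
  (finite_count_le (2 * n + 1)).subset fun _ hT => hT.1.le

/-- The complete binary trees with `2n+1` vertices, as a finset. -/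
noncomputable def completeTrees (n : ℕ) : Finset BinTree := (finite_complete n).toFinset

theorem mem_completeTrees {n : ℕ} {T : BinTree} :
    T ∈ completeTrees n ↔ T.count = 2 * n + 1 ∧ T.IsComplete := by
  simp [completeTrees]

theorem IsComplete.eq_leaf_or_count {T : BinTree} (h : T.IsComplete) :
    T = leaf ∨ ∃ i, T.count = 2 * i + 1 := by
  induction T with
  | leaf => exact Or.inl rfl
  | node l r ihl ihr =>
    right
    obtain ⟨⟨rfl, rfl⟩ | ⟨hl, hr⟩, hcl, hcr⟩ := h
    · exact ⟨0, rfl⟩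
    · obtain ⟨i, hi⟩ := (ihl hcl).resolve_left hl
      obtain ⟨j, hj⟩ := (ihr hcr).resolve_left hr
      exact ⟨i + j + 1, by simp only [count]; omega⟩

theorem completeTrees_zero : completeTrees 0 = {node leaf leaf} := by
  ext T
  rw [mem_completeTrees, mem_singleton]
  constructor
  · rintro ⟨hc, -⟩
    cases T with
    | leaf => simp [count] at hc
    | node l r =>
      simp only [count] at hc
      rw [count_eq_zero.mp (show l.count = 0 by omega), count_eq_zero.mp (show r.count = 0 by omega)]
  · rintro rfl
    simp [count, IsComplete]

theorem node_mem_completeTrees_succ {n : ℕ} {l r : BinTree} :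
    node l r ∈ completeTrees (n + 1) ↔
      ∃ i j, i + j = n ∧ l ∈ completeTrees i ∧ r ∈ completeTrees j := by
  simp only [mem_completeTrees, count, IsComplete]
  constructor
  · rintro ⟨hc, ⟨rfl, rfl⟩ | ⟨hl, hr⟩, hcl, hcr⟩
    · simp [count] at hc
    · obtain ⟨i, hi⟩ := hcl.eq_leaf_or_count.resolve_left hl
      obtain ⟨j, hj⟩ := hcr.eq_leaf_or_count.resolve_left hr
      exact ⟨i, j, by omega, ⟨hi, hcl⟩, hj, hcr⟩
  · rintro ⟨i, j, hij, ⟨hi, hcl⟩, hj, hcr⟩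
    refine ⟨by omega, Or.inr ⟨?_, ?_⟩, hcl, hcr⟩
    · rintro rfl
      simp [count] at hi
    · rintro rfl
      simp [count] at hj

/-- The hook weight `∏ h · 2^h` over the hook lengths of a tree. -/
def hookProd (T : BinTree) : ℚ := ((hooks T).map fun h : ℕ => (h : ℚ) * (2 : ℚ) ^ h).prod

theorem hookProd_node (l r : BinTree) : hookProd (node l r) =
    ((l.count + r.count + 1 : ℕ) : ℚ) * 2 ^ (l.count + r.count + 1) *
      (hookProd l * hookProd r) := by
  simp [hookProd, hooks]

/-- The sum of the reciprocal hook weights of the complete binary trees with `2n+1` vertices. -/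
noncomputable def weightSum (n : ℕ) : ℚ := ∑ T ∈ completeTrees n, (hookProd T)⁻¹

/-- Removing the root of a complete tree yields a convolution recurrence. -/
theorem weightSum_succ (n : ℕ) : weightSum (n + 1) =
    (((2 * n + 3 : ℕ) : ℚ) * 2 ^ (2 * n + 3))⁻¹ *
      ∑ p ∈ antidiagonal n, weightSum p.1 * weightSum p.2 := by
  simp only [weightSum, sum_mul_sum, ← sum_product']
  rw [sum_sigma', mul_sum]
  symm
  refine sum_bij (fun x _ => node x.2.1 x.2.2) ?_ ?_ ?_ ?_
  · rintro ⟨⟨i, j⟩, l, r⟩ h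
    simp only [mem_sigma, HasAntidiagonal.mem_antidiagonal, mem_product] at h
    exact node_mem_completeTrees_succ.mpr ⟨i, j, h.1, h.2⟩
  · rintro ⟨⟨i, j⟩, l, r⟩ h ⟨⟨i', j'⟩, l', r'⟩ h' heq
    simp only [mem_sigma, mem_product, mem_completeTrees] at h h'
    simp only [node.injEq] at heq
    obtain ⟨rfl, rfl⟩ := heq
    -- the vertex counts of the two subtrees determine `i` and `j`
    obtain rfl : i = i' := by omega
    obtain rfl : j = j' := by omega
    rfl
  · intro T hT
    cases T with
    | leaf => simp [mem_completeTrees, count] at hT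
    | node l r =>
      obtain ⟨i, j, hij, hl, hr⟩ := node_mem_completeTrees_succ.mp hT
      exact ⟨⟨(i, j), l, r⟩, by simp [hij, hl, hr], rfl⟩
  · rintro ⟨⟨i, j⟩, l, r⟩ h
    simp only [mem_sigma, HasAntidiagonal.mem_antidiagonal, mem_product, mem_completeTrees] at h
    have hc : l.count + r.count + 1 = 2 * n + 3 := by omega
    simp only [hookProd_node, hc, mul_inv]

theorem sum_range_pairs (f : ℕ → ℕ) (n : ℕ) :
    ∑ i ∈ range n, (f (2 * i) + f (2 * i + 1)) = ∑ k ∈ range (2 * n), f k := by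
  induction n with
  | zero => simp
  | succ n ih => rw [sum_range_succ, ih, Nat.mul_succ, sum_range_succ, sum_range_succ, add_assoc]

/-- Pascal's rule turns the odd-indexed entries of row `2n+2` into all entries of row `2n+1`. -/
theorem sum_choose_odd (n : ℕ) :
    ∑ i ∈ range (n + 1), (2 * n + 2).choose (2 * i + 1) = 2 ^ (2 * n + 1) := by
  rw [← Nat.sum_range_choose, show 2 * n + 1 + 1 = 2 * (n + 1) by ring, ← sum_range_pairs]
  exact sum_congr rfl fun i _ => Nat.choose_succ_succ _ _

theorem weightSum_eq (n : ℕ) :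
    weightSum n = (((2 * n + 1).factorial : ℚ) * 2 ^ (3 * n + 1))⁻¹ := by
  induction n using Nat.strong_induction_on with
  | _ n ih =>
  cases n with
  | zero => simp [weightSum, completeTrees_zero, hookProd, hooks, count]
  | succ n =>
    have key : ∀ p ∈ antidiagonal n, weightSum p.1 * weightSum p.2 =
        ((2 * n + 2).choose (2 * p.1 + 1) : ℚ) *
          (((2 * n + 2).factorial : ℚ) * 2 ^ (3 * n + 2))⁻¹ := by
      rintro ⟨i, j⟩ hp
      obtain rfl := HasAntidiagonal.mem_antidiagonal.mp hp
      dsimp only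
      rw [ih i (by omega), ih j (by omega), ← mul_inv]
      have hC := Nat.choose_mul_factorial_mul_factorial
        (show 2 * i + 1 ≤ 2 * (i + j) + 2 by omega)
      rw [show 2 * (i + j) + 2 - (2 * i + 1) = 2 * j + 1 by omega] at hC
      rw [← hC]
      have h0 : ((2 * (i + j) + 2).choose (2 * i + 1) : ℚ) ≠ 0 := by
        exact_mod_cast (Nat.choose_pos (by omega)).ne'
      push_cast
      field_simp
      ring
    rw [weightSum_succ, sum_congr rfl key, ← sum_mul,
      Nat.sum_antidiagonal_eq_sum_range_succ_mk, ← Nat.cast_sum, sum_choose_odd,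
      show 2 * (n + 1) + 1 = (2 * n + 2) + 1 by ring, Nat.factorial_succ (2 * n + 2)]
    push_cast
    field_simp
    ring

end BinTree

/-- For every positive integer `n`, the sum over all complete binary trees `T`
with `2n+1` vertices of `(2n+1)! · 2^(1+2+⋯+(2n+1)) / ∏_{h ∈ H(T)} (h · 2^h)`
equals `2^(1+2+⋯+2n) / 2^n`. -/
theorem han_second_formula_complete_reformulated (n : ℕ) (hn : 0 < n) :
    ∑ᶠ T ∈ {T : BinTree | T.count = 2 * n + 1 ∧ T.IsComplete},
      (((2 * n + 1).factorial : ℚ) * (2 : ℚ) ^ (∑ i ∈ Finset.range (2 * n + 2), i)) /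
        ((BinTree.hooks T).map fun h : ℕ => (h : ℚ) * (2 : ℚ) ^ h).prod
      = (2 : ℚ) ^ (∑ i ∈ Finset.range (2 * n + 1), i) / (2 : ℚ) ^ n := by
  have hsum : (∑ i ∈ Finset.range (2 * n + 2), i) =
      (∑ i ∈ Finset.range (2 * n + 1), i) + (2 * n + 1) :=
    Finset.sum_range_succ _ _
  have hfin := BinTree.weightSum_eq n
  rw [finsum_mem_eq_finite_toFinset_sum _ (BinTree.finite_complete n)]
  simp only [div_eq_mul_inv, ← Finset.mul_sum]
  simp only [BinTree.weightSum, BinTree.hookProd, BinTree.completeTrees] at hfin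
  rw [hfin, hsum]
  have h0 : ((2 * n + 1).factorial : ℚ) ≠ 0 := by exact_mod_cast Nat.factorial_ne_zero _
  field_simp
  ring
end

section
/- For every positive integer n, the number of complete binary trees with 2n+1 vertices equipped with a staircase labeling equals 2^{(1+2+⋯+2n) − n} = 2^{2n^2}; equivalently, exactly a 1/2^n fraction of the 2^{1+2+⋯+2n} staircase arrays in S(2n+1,2) correspond, under the bijection between staircase arrays and staircase-labeled binary trees, to complete binary trees. -/
/-! ### Labelled full binary trees -/

/-- Nonempty complete binary trees with a word over `Fin 2` at each vertex. -/
inductive FT : Type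
  | leaf : List (Fin 2) → FT
  | node : List (Fin 2) → FT → FT → FT

namespace FT

/-- The underlying unlabelled tree. -/
def shape : FT → KTree 2
  | leaf _ => KTree.node fun _ => KTree.nil
  | node _ l r => KTree.node fun i => if i = 0 then shape l else shape r

/-- The label at a position, or `none` if there is no vertex at that position. -/
def lookup : FT → List (Fin 2) → Option (List (Fin 2))
  | leaf w, [] => some w
  | leaf _, _ :: _ => none
  | node w _ _, [] => some w
  | node _ l r, i :: p => if i = 0 then lookup l p else lookup r p

/-- The multiset of all labels. -/
def labels : FT → Multiset (List (Fin 2))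
  | leaf w => {w}
  | node w l r => w ::ₘ (labels l + labels r)

/-- The entry condition of a staircase labeling: below a vertex with label `w`, the entry at index
`w.length` of a label names the subtree of that vertex to which the label belongs. -/
def Ent : FT → Prop
  | leaf _ => True
  | node w l r => (∀ x ∈ labels l, x[w.length]? = some 0) ∧
      (∀ x ∈ labels r, x[w.length]? = some 1) ∧ Ent l ∧ Ent r

theorem shape_ne_nil (t : FT) : t.shape ≠ KTree.nil := by
  cases t <;> simp [shape]

theorem shape_isComplete (t : FT) : t.shape.IsComplete := by
  induction t with
  | leaf w => simp [shape, KTree.IsComplete]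
  | node w l r hl hr => simp [shape, KTree.IsComplete, Fin.forall_fin_two, shape_ne_nil, hl, hr]

theorem count_shape (t : FT) : t.shape.count = t.labels.card := by
  induction t with
  | leaf w => simp [shape, KTree.count, labels]
  | node w l r hl hr => simp [shape, KTree.count, labels, hl, hr]; omega

theorem sub_shape (t : FT) (p : List (Fin 2)) :
    t.shape.sub p ≠ KTree.nil ↔ ∃ x, t.lookup p = some x := by
  induction t generalizing p with
  | leaf w =>
    cases p with
    | nil => simp [shape, KTree.sub, lookup]
    | cons i p => cases p <;> simp [shape, KTree.sub, lookup]
  | node w l r hl hr =>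
    cases p with
    | nil => simp [shape, KTree.sub, lookup]
    | cons i p => by_cases h : i = 0 <;> simp [shape, KTree.sub, lookup, h, ← hl, ← hr]

theorem mem_labels (t : FT) (x : List (Fin 2)) : x ∈ t.labels ↔ ∃ p, t.lookup p = some x := by
  induction t with
  | leaf w =>
    constructor
    · intro h
      exact ⟨[], by simp_all [labels, lookup]⟩
    · rintro ⟨p, hp⟩
      cases p <;> simp_all [labels, lookup]
  | node w l r hl hr =>
    simp only [labels, Multiset.mem_cons, Multiset.mem_add, hl, hr]
    constructor
    · rintro (rfl | ⟨p, hp⟩ | ⟨p, hp⟩)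
      · exact ⟨[], rfl⟩
      · exact ⟨0 :: p, by simpa [lookup] using hp⟩
      · exact ⟨1 :: p, by simpa [lookup] using hp⟩
    · rintro ⟨p, hp⟩
      cases p with
      | nil => simp_all [lookup]
      | cons i p =>
        by_cases h : i = 0
        · exact Or.inr (Or.inl ⟨p, by simpa [lookup, h] using hp⟩)
        · exact Or.inr (Or.inr ⟨p, by simpa [lookup, h] using hp⟩)

theorem lookup_injective : Function.Injective lookup := by
  intro t
  induction t with
  | leaf w =>
    intro t' h
    cases t' with
    | leaf w' => simpa [lookup] using congrFun h []
    | node w' l r =>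
      have h0 := congrFun h [0]
      cases l <;> simp [lookup] at h0
  | node w l r hl hr =>
    intro t' h
    cases t' with
    | leaf w' =>
      have h0 := congrFun h [0]
      cases l <;> simp [lookup] at h0
    | node w' l' r' =>
      have h1 : w = w' := by simpa [lookup] using congrFun h []
      have h2 : l = l' := hl (funext fun p => by simpa [lookup] using congrFun h (0 :: p))
      have h3 : r = r' := hr (funext fun p => by simpa [lookup] using congrFun h (1 :: p))
      rw [h1, h2, h3]

theorem ent_iff (t : FT) : t.Ent ↔ ∀ p q r x y, t.lookup p = some x →
    t.lookup (p ++ r :: q) = some y → y[x.length]? = some r := by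
  induction t with
  | leaf w =>
    simp only [Ent, true_iff]
    intro p q r x y _ hy
    cases p <;> simp [lookup] at hy
  | node w l r hl hr =>
    simp only [Ent, hl, hr, mem_labels]
    constructor
    · rintro ⟨h1, h2, h3, h4⟩ p q s x y hx hy
      cases p with
      | nil =>
        simp only [lookup, Option.some.injEq] at hx
        subst hx
        fin_cases s
        · exact h1 y ⟨q, by simpa [lookup] using hy⟩
        · exact h2 y ⟨q, by simpa [lookup] using hy⟩
      | cons i p =>
        by_cases h : i = 0
        · exact h3 p q s x y (by simpa [lookup, h] using hx) (by simpa [lookup, h] using hy)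
        · exact h4 p q s x y (by simpa [lookup, h] using hx) (by simpa [lookup, h] using hy)
    · intro H
      refine ⟨?_, ?_, ?_, ?_⟩
      · rintro x ⟨p, hp⟩
        exact H [] p 0 w x rfl (by simpa [lookup] using hp)
      · rintro x ⟨p, hp⟩
        exact H [] p 1 w x rfl (by simpa [lookup] using hp)
      · intro p q s x y hx hy
        exact H (0 :: p) q s x y (by simpa [lookup] using hx) (by simpa [lookup] using hy)
      · intro p q s x y hx hy
        exact H (1 :: p) q s x y (by simpa [lookup] using hx) (by simpa [lookup] using hy)

theorem nodup_iff (t : FT) : (t.labels.map List.length).Nodup ↔ ∀ p q x y,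
    t.lookup p = some x → t.lookup q = some y → x.length = y.length → p = q := by
  induction t with
  | leaf w =>
    simp only [labels, Multiset.map_singleton, Multiset.nodup_singleton, true_iff]
    intro p q x y hx hy _
    cases p <;> cases q <;> simp_all [lookup]
  | node w l r hl hr =>
    simp only [labels, Multiset.map_cons, Multiset.map_add, Multiset.nodup_cons,
      Multiset.nodup_add, hl, hr, Multiset.disjoint_left, Multiset.mem_add, Multiset.mem_map,
      mem_labels]
    constructor
    · rintro ⟨h0, h1, h2, h3⟩ p q x y hx hy hxy
      cases p with
      | nil =>
        cases q with
        | nil => rfl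
        | cons j q =>
          simp only [lookup, Option.some.injEq] at hx
          subst hx
          refine absurd ?_ h0
          by_cases hj : j = 0
          · exact Or.inl ⟨y, ⟨q, by simpa [lookup, hj] using hy⟩, hxy.symm⟩
          · exact Or.inr ⟨y, ⟨q, by simpa [lookup, hj] using hy⟩, hxy.symm⟩
      | cons i p =>
        cases q with
        | nil =>
          simp only [lookup, Option.some.injEq] at hy
          subst hy
          refine absurd ?_ h0
          by_cases hj : i = 0
          · exact Or.inl ⟨x, ⟨p, by simpa [lookup, hj] using hx⟩, hxy⟩
          · exact Or.inr ⟨x, ⟨p, by simpa [lookup, hj] using hx⟩, hxy⟩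
        | cons j q =>
          fin_cases i <;> fin_cases j <;> simp [lookup] at hx hy ⊢
          · exact h1 p q x y hx hy hxy
          · exact h3 ⟨x, ⟨p, hx⟩, rfl⟩ ⟨y, ⟨q, hy⟩, hxy.symm⟩
          · exact h3 ⟨y, ⟨q, hy⟩, rfl⟩ ⟨x, ⟨p, hx⟩, hxy⟩
          · exact h2 p q x y hx hy hxy
    · intro H
      refine ⟨?_, ?_, ?_, ?_⟩
      · rintro (⟨x, ⟨p, hp⟩, hx⟩ | ⟨x, ⟨p, hp⟩, hx⟩)
        · simpa using H [] (0 :: p) w x rfl (by simpa [lookup] using hp) hx.symm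
        · simpa using H [] (1 :: p) w x rfl (by simpa [lookup] using hp) hx.symm
      · intro p q x y hx hy hxy
        simpa using H (0 :: p) (0 :: q) x y (by simpa [lookup] using hx)
          (by simpa [lookup] using hy) hxy
      · intro p q x y hx hy hxy
        simpa using H (1 :: p) (1 :: q) x y (by simpa [lookup] using hx)
          (by simpa [lookup] using hy) hxy
      · rintro _ ⟨x, ⟨p, hx⟩, rfl⟩ ⟨y, ⟨q, hy⟩, hxy⟩
        simpa using H (0 :: p) (1 :: q) x y (by simpa [lookup] using hx)
          (by simpa [lookup] using hy) hxy.symm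

theorem card_labels_odd (t : FT) : Odd t.labels.card := by
  induction t with
  | leaf w => simp [labels]
  | node w l r hl hr =>
    simp only [labels, Multiset.card_cons, Multiset.card_add]
    exact (hl.add_odd hr).add_one

theorem exists_of_complete (T : KTree 2) (hT : T ≠ KTree.nil) (hc : T.IsComplete)
    (lab : List (Fin 2) → List (Fin 2)) :
    ∃ t : FT, t.shape = T ∧ ∀ p x, t.lookup p = some x → x = lab p := by
  induction T generalizing lab with
  | nil => exact absurd rfl hT
  | node c ih =>
    obtain ⟨h | h, hc⟩ := hc
    · refine ⟨leaf (lab []), ?_, ?_⟩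
      · simp [shape, funext h]
      · intro p x hx
        cases p <;> simp_all [lookup]
    · obtain ⟨l, hl, hl'⟩ := ih 0 (h 0) (hc 0) fun p => lab (0 :: p)
      obtain ⟨r, hr, hr'⟩ := ih 1 (h 1) (hc 1) fun p => lab (1 :: p)
      refine ⟨node (lab []) l r, ?_, ?_⟩
      · simp only [shape, hl, hr, KTree.node.injEq]
        funext i
        fin_cases i <;> simp
      · intro p x hx
        cases p with
        | nil => simp_all [lookup]
        | cons i p =>
          fin_cases i
          · exact hl' p x (by simpa [lookup] using hx)
          · exact hr' p x (by simpa [lookup] using hx)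

end FT

/-! ### Counting by recursion on the root -/

/-- The word `w` has the prescribed entry `v i` at each position `i ∈ D`. -/
def Sat (D : Finset ℕ) (v : ℕ → Fin 2) (w : List (Fin 2)) : Prop :=
  ∀ i ∈ D, w[i]? = some (v i)

theorem sat_insert {D : Finset ℕ} {m : ℕ} (hm : m ∉ D) (v : ℕ → Fin 2) (r : Fin 2)
    (w : List (Fin 2)) :
    Sat (insert m D) (Function.update v m r) w ↔ w[m]? = some r ∧ Sat D v w := by
  simp only [Sat, Finset.mem_insert, forall_eq_or_imp, Function.update_self]
  refine and_congr_right fun _ => forall₂_congr fun i hi => ?_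
  rw [Function.update_of_ne (by rintro rfl; exact hm hi)]

theorem exists_finset_sat (m : ℕ) (D : Finset ℕ) (v : ℕ → Fin 2) (hD : ∀ i ∈ D, i < m) :
    ∃ W : Finset (List (Fin 2)), (∀ w, w ∈ W ↔ w.length = m ∧ Sat D v w) ∧
      W.card * 2 ^ D.card = 2 ^ m := by
  classical
  refine ⟨(Fintype.piFinset fun i : Fin m =>
    if (i : ℕ) ∈ D then {v i} else Finset.univ).image List.ofFn, ?_, ?_⟩
  · intro w
    simp only [Finset.mem_image, Fintype.mem_piFinset]
    constructor
    · rintro ⟨f, hf, rfl⟩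
      refine ⟨by simp, fun i hi => ?_⟩
      have := hf ⟨i, hD i hi⟩
      simp only [hi, if_true, Finset.mem_singleton] at this
      simp [hD i hi, this]
    · rintro ⟨rfl, hs⟩
      refine ⟨w.get, fun i => ?_, List.ofFn_get w⟩
      split_ifs with hi
      · have := hs i hi
        simpa using this
      · simp
  · rw [Finset.card_image_of_injective _ List.ofFn_injective, Fintype.card_piFinset]
    have h1 : ∀ i : Fin m, (if (i : ℕ) ∈ D then ({v i} : Finset (Fin 2)) else Finset.univ).card
        = (fun j : ℕ => if j ∈ D then 1 else 2) i := by
      intro i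
      by_cases hi : (i : ℕ) ∈ D <;> simp [hi]
    rw [Finset.prod_congr rfl fun i _ => h1 i, Fin.prod_univ_eq_prod_range
      (fun j : ℕ => if j ∈ D then 1 else 2)]
    have h2 : D ⊆ Finset.range m := fun i hi => Finset.mem_range.2 (hD i hi)
    have h3 : (2 : ℕ) ^ D.card = ∏ j ∈ Finset.range m, if j ∈ D then 2 else 1 := by
      rw [Finset.prod_ite_mem, Finset.inter_eq_right.2 h2, Finset.prod_const]
    rw [h3, ← Finset.prod_mul_distrib, Finset.prod_congr rfl (g := fun _ => 2)]
    · simp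
    · intro i _
      by_cases hi : i ∈ D <;> simp [hi]

theorem card_odd_subsets {S : Finset ℕ} {k : ℕ} (hS : S.card = k + 1) :
    (S.powerset.filter fun A => Odd A.card).card = 2 ^ k := by
  have h1 := Finset.sum_powerset_neg_one_pow_card_of_nonempty
    (x := S) (Finset.card_pos.1 (by omega))
  have h2 : ∑ A ∈ S.powerset, ((1 : ℤ) - (-1) ^ A.card)
      = ∑ A ∈ S.powerset, if Odd A.card then 2 else 0 := by
    refine Finset.sum_congr rfl fun A _ => ?_
    split_ifs with h
    · rw [h.neg_one_pow]; norm_num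
    · rw [(Nat.not_odd_iff_even.1 h).neg_one_pow]; norm_num
  rw [Finset.sum_sub_distrib, h1, ← Finset.sum_filter] at h2
  simp only [Finset.sum_const, Finset.card_powerset, hS] at h2
  simp only [nsmul_eq_mul] at h2
  push_cast [pow_succ] at h2
  have : ((S.powerset.filter fun A => Odd A.card).card : ℤ) = 2 ^ k := by linarith
  exact_mod_cast this

/-- `t` is staircase-labelled with set of label lengths `S`, each length occurring once, and all its
labels have the entries prescribed by `v` on `D`. -/
def Good (S D : Finset ℕ) (v : ℕ → Fin 2) (t : FT) : Prop :=
  t.labels.map List.length = S.val ∧ t.Ent ∧ ∀ x ∈ t.labels, Sat D v x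

theorem Good.card {S D : Finset ℕ} {v : ℕ → Fin 2} {t : FT} (h : Good S D v t) :
    t.labels.card = S.card := by
  simpa using congrArg Multiset.card h.1

/-- A tree determines its set of label lengths, so the splitting at the root can be recovered. -/
theorem Good.unique {S S' D D' : Finset ℕ} {v v' : ℕ → Fin 2} {t : FT} (h : Good S D v t)
    (hh : Good S' D' v' t) : S = S' :=
  Finset.val_injective (h.1.symm.trans hh.1)

/-- The decomposition of a good tree at its root, whose label has the smallest length `m`. -/
theorem good_node_iff {S D : Finset ℕ} {m : ℕ} (v : ℕ → Fin 2) (hm : ∀ s ∈ S, m < s)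
    (hD : m ∉ D) (w : List (Fin 2)) (l r : FT) :
    Good (insert m S) D v (.node w l r) ↔ (w.length = m ∧ Sat D v w) ∧ ∃ A ⊆ S,
      Good A (insert m D) (Function.update v m 0) l ∧
      Good (S \ A) (insert m D) (Function.update v m 1) r := by
  have hmS : m ∉ S := fun h => lt_irrefl _ (hm m h)
  have hval : (insert m S).val = m ::ₘ S.val := Finset.insert_val_of_notMem hmS
  simp only [Good, sat_insert hD, hval, FT.labels, FT.Ent, Multiset.map_cons, Multiset.map_add]
  constructor
  · rintro ⟨h1, ⟨h2, h3, h4, h5⟩, h6⟩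
    have hlen : ∀ x, x ∈ l.labels ∨ x ∈ r.labels → w.length < x.length := by
      rintro x (hx | hx)
      · exact (List.getElem?_eq_some_iff.1 (h2 x hx)).1
      · exact (List.getElem?_eq_some_iff.1 (h3 x hx)).1
    have hw : w.length = m := by
      have hwm : w.length ∈ m ::ₘ S.val := h1 ▸ Multiset.mem_cons_self _ _
      have hmw : m ∈ w.length ::ₘ (l.labels.map List.length + r.labels.map List.length) :=
        h1 ▸ Multiset.mem_cons_self _ _
      rcases Multiset.mem_cons.1 hwm with h | h
      · exact h
      rcases Multiset.mem_cons.1 hmw with h' | h'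
      · exact h'.symm
      have hlt := hm _ h
      have : w.length < m := by
        rcases Multiset.mem_add.1 h' with h' | h' <;>
          obtain ⟨x, hx, rfl⟩ := Multiset.mem_map.1 h'
        · exact hlen x (Or.inl hx)
        · exact hlen x (Or.inr hx)
      omega
    subst hw
    have h7 := (Multiset.cons_inj_right _).1 h1
    have hnd : (l.labels.map List.length + r.labels.map List.length).Nodup := h7 ▸ S.nodup
    have hl := (Multiset.nodup_add.1 hnd).1
    refine ⟨⟨rfl, h6 w (by simp)⟩, ⟨_, hl⟩, ?_, ?_, ?_⟩
    · rw [← Finset.val_le_iff, ← h7]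
      exact Multiset.le_add_right _ _
    · exact ⟨rfl, h4, fun x hx => ⟨h2 x hx, h6 x (by simp [hx])⟩⟩
    · refine ⟨?_, h5, fun x hx => ⟨h3 x hx, h6 x (by simp [hx])⟩⟩
      rw [Finset.sdiff_val, ← h7]
      simp
  · rintro ⟨⟨rfl, hw⟩, A, hA, ⟨h1, h2, h3⟩, ⟨h4, h5, h6⟩⟩
    refine ⟨?_, ⟨fun x hx => (h3 x hx).1, fun x hx => (h6 x hx).1, h2, h5⟩, ?_⟩
    · rw [h1, h4, Finset.sdiff_val, add_tsub_cancel_of_le (Finset.val_le_iff.2 hA)]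
    · intro x hx
      rcases Multiset.mem_cons.1 hx with rfl | hx
      · exact hw
      rcases Multiset.mem_add.1 hx with hx | hx
      · exact (h3 x hx).2
      · exact (h6 x hx).2

/-- Counting good trees with `2k+1` vertices, in subtraction-free form.  The finset witnesses that
there are finitely many. -/
theorem exists_finset_good (k : ℕ) : ∀ (S D : Finset ℕ) (v : ℕ → Fin 2), S.card = 2 * k + 1 →
    (∀ i ∈ D, ∀ s ∈ S, i < s) →
    ∃ F : Finset FT, (∀ t, t ∈ F ↔ Good S D v t) ∧
      F.card * 2 ^ (D.card * (2 * k + 1) + k) = 2 ^ (∑ s ∈ S, s) := by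
  classical
  induction k using Nat.strong_induction_on with
  | _ k ih =>
  intro S D v hS hDS
  have hne : S.Nonempty := Finset.card_pos.1 (by omega)
  obtain ⟨m, S', hmS', rfl, hmin⟩ : ∃ m S', m ∉ S' ∧ insert m S' = S ∧ ∀ s ∈ S', m < s :=
    ⟨S.min' hne, S.erase (S.min' hne), by simp, Finset.insert_erase (S.min'_mem hne),
      fun s hs => S.min'_lt_of_mem_erase_min' hne hs⟩
  have hDm : ∀ i ∈ D, i < m := fun i hi => hDS i hi m (by simp)
  have hmD : m ∉ D := fun h => lt_irrefl _ (hDm m h)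
  obtain ⟨W, hW, hWc⟩ := exists_finset_sat m D v hDm
  rw [Finset.card_insert_of_notMem hmS'] at hS
  rcases Nat.eq_zero_or_pos k with rfl | hk
  · obtain rfl : S' = ∅ := Finset.card_eq_zero.1 (by omega)
    refine ⟨W.image FT.leaf, ?_, ?_⟩
    · intro t
      cases t with
      | leaf w =>
        simp [hW, Good, FT.labels, FT.Ent]
      | node w l r =>
        simp only [Finset.mem_image, reduceCtorEq, and_false, exists_false, false_iff]
        intro h
        have h1 := h.card
        have h2 := l.card_labels_odd.pos
        simp [FT.labels] at h1
        simp [h1.1] at h2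
    · rw [Finset.card_image_of_injective _ fun a b h => by simpa using h]
      simpa using hWc
  · obtain ⟨j, rfl⟩ : ∃ j, k = j + 1 := ⟨k - 1, by omega⟩
    have hS'c : S'.card = 2 * j + 1 + 1 := by omega
    -- Families of all good trees for the subsets that can occur as label lengths of a subtree.
    have key : ∀ (A : Finset ℕ) (i : Fin 2), ∃ F : Finset FT, A ⊆ S' → ∀ a, a ≤ j →
        A.card = 2 * a + 1 →
        (∀ t, t ∈ F ↔ Good A (insert m D) (Function.update v m i) t) ∧
        F.card * 2 ^ ((D.card + 1) * (2 * a + 1) + a) = 2 ^ (∑ s ∈ A, s) := by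
      intro A i
      by_cases hA : A ⊆ S' ∧ ∃ a, a ≤ j ∧ A.card = 2 * a + 1
      · obtain ⟨hA, a, ha, hAc⟩ := hA
        obtain ⟨F, hF⟩ := ih a (by omega) A (insert m D) (Function.update v m i) hAc (by
          intro i hi s hs
          rcases Finset.mem_insert.1 hi with rfl | hi
          · exact hmin s (hA hs)
          · exact hDS i hi s (Finset.mem_insert_of_mem (hA hs)))
        refine ⟨F, fun _ a' _ ha' => ?_⟩
        obtain rfl : a' = a := by omega
        rwa [Finset.card_insert_of_notMem hmD] at hF
      · exact ⟨∅, fun h1 a h2 h3 => absurd ⟨h1, a, h2, h3⟩ hA⟩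
    choose F hF using key
    have hsplit : ∀ A ∈ S'.powerset.filter (fun A => Odd A.card), A ⊆ S' ∧ ∃ a b, a + b = j ∧
        A.card = 2 * a + 1 ∧ (S' \ A).card = 2 * b + 1 := by
      intro A hA
      simp only [Finset.mem_filter, Finset.mem_powerset] at hA
      obtain ⟨hA, a, ha⟩ := hA
      have h1 := Finset.card_sdiff_add_card_eq_card hA
      exact ⟨hA, a, j - a, by omega, ha, by omega⟩
    set P := (S'.powerset.filter fun A => Odd A.card).sigma
      (fun A => F A 0 ×ˢ F (S' \ A) 1) with hP
    have hPmem : ∀ A l r, (⟨A, l, r⟩ : (_ : Finset ℕ) × FT × FT) ∈ P ↔ A ⊆ S' ∧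
        Good A (insert m D) (Function.update v m 0) l ∧
        Good (S' \ A) (insert m D) (Function.update v m 1) r := by
      intro A l r
      rw [hP, Finset.mem_sigma, Finset.mem_product]
      constructor
      · rintro ⟨hA, hl, hr⟩
        obtain ⟨hA, a, b, hab, ha, hb⟩ := hsplit A hA
        exact ⟨hA, ((hF A 0 hA a (by omega) ha).1 l).1 hl,
          ((hF _ 1 Finset.sdiff_subset b (by omega) hb).1 r).1 hr⟩
      · rintro ⟨hA, hl, hr⟩
        have hA' : A ∈ S'.powerset.filter (fun A => Odd A.card) := by
          simp [hA, ← hl.card, l.card_labels_odd]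
        obtain ⟨hA, a, b, hab, ha, hb⟩ := hsplit A hA'
        exact ⟨hA', ((hF A 0 hA a (by omega) ha).1 l).2 hl,
          ((hF _ 1 Finset.sdiff_subset b (by omega) hb).1 r).2 hr⟩
    refine ⟨(W ×ˢ P).image fun x => FT.node x.1 x.2.2.1 x.2.2.2, ?_, ?_⟩
    · intro t
      cases t with
      | leaf w =>
        simp only [Finset.mem_image, reduceCtorEq, and_false, exists_false, false_iff]
        intro h
        have h1 := h.card
        simp [FT.labels, Finset.card_insert_of_notMem hmS'] at h1
        simp [h1] at hS'c
      | node w l r =>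
        rw [good_node_iff v hmin hmD, Finset.mem_image]
        constructor
        · rintro ⟨⟨w', A, l', r'⟩, hx, he⟩
          obtain ⟨rfl, rfl, rfl⟩ : w' = w ∧ l' = l ∧ r' = r := by simpa using he
          rw [Finset.mem_product] at hx
          exact ⟨(hW _).1 hx.1, A, (hPmem _ _ _).1 hx.2⟩
        · rintro ⟨hw, A, hA⟩
          exact ⟨⟨w, A, l, r⟩, Finset.mem_product.2 ⟨(hW _).2 hw, (hPmem _ _ _).2 hA⟩, rfl⟩
    · rw [Finset.card_image_of_injOn]
      -- Every splitting contributes the same number of pairs of subtrees.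
      · have hc : ∀ A ∈ S'.powerset.filter (fun A => Odd A.card),
            (F A 0 ×ˢ F (S' \ A) 1).card * 2 ^ ((D.card + 1) * (2 * j + 2) + j)
              = 2 ^ (∑ s ∈ S', s) := by
          intro A hA
          obtain ⟨hA, a, b, rfl, ha, hb⟩ := hsplit A hA
          have e1 := (hF A 0 hA a (by omega) ha).2
          have e2 := (hF _ 1 Finset.sdiff_subset b (by omega) hb).2
          rw [← Finset.sum_sdiff hA, pow_add _ (∑ s ∈ S' \ A, s), ← e1, ← e2, Finset.card_product]
          ring
        have hPc : P.card * 2 ^ ((D.card + 1) * (2 * j + 2) + j)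
            = 2 ^ (2 * j + 1) * 2 ^ (∑ s ∈ S', s) := by
          rw [hP, Finset.card_sigma, Finset.sum_mul, Finset.sum_congr rfl hc, Finset.sum_const,
            card_odd_subsets hS'c, smul_eq_mul]
        rw [Finset.card_product, Finset.sum_insert hmS', pow_add _ m, ← hWc]
        refine Nat.eq_of_mul_eq_mul_left (show 0 < 2 ^ (2 * j + 1) by positivity) ?_
        calc 2 ^ (2 * j + 1) * (W.card * P.card *
              2 ^ (D.card * (2 * (j + 1) + 1) + (j + 1)))
            = W.card * 2 ^ D.card * (P.card * 2 ^ ((D.card + 1) * (2 * j + 2) + j)) := by ring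
          _ = _ := by rw [hPc]; ring
      · rintro ⟨w, A, l, r⟩ hx ⟨w', A', l', r'⟩ hx' he
        obtain ⟨rfl, rfl, rfl⟩ : w = w' ∧ l = l' ∧ r = r' := by simpa using he
        rw [Finset.mem_coe, Finset.mem_product] at hx hx'
        obtain rfl : A = A' := ((hPmem _ _ _).1 hx.2).2.1.unique ((hPmem _ _ _).1 hx'.2).2.1
        rfl

/-! ### Staircase labelings as labelled full binary trees -/

theorem Staircase.lab_congr {k n : ℕ} {T : KTree k} (s u : Staircase k n T)
    (h : s.lab = u.lab) : s = u := by
  cases s; cases u; cases h; rfl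

/-- The staircase labeling read off from a good tree.  The default value `[]` is never used. -/
def FT.toStaircase (N : ℕ) (t : FT) (ht : Good (Finset.range N) ∅ 0 t) :
    Staircase 2 N t.shape where
  lab p := (t.lookup p.1).getD []
  length_lt := by
    rintro ⟨p, hp⟩
    obtain ⟨x, hx⟩ := (t.sub_shape p).1 hp
    have : x.length ∈ (Finset.range N).val :=
      ht.1 ▸ Multiset.mem_map_of_mem _ ((t.mem_labels x).2 ⟨p, hx⟩)
    simpa [hx] using this
  length_inj := by
    rintro ⟨p, hp⟩ ⟨q, hq⟩ h
    obtain ⟨x, hx⟩ := (t.sub_shape p).1 hp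
    obtain ⟨y, hy⟩ := (t.sub_shape q).1 hq
    have hnd : (t.labels.map List.length).Nodup := ht.1 ▸ (Finset.range N).nodup
    exact Subtype.ext ((t.nodup_iff.1 hnd) p q x y hx hy (by simpa [hx, hy] using h))
  length_mono := by
    intro p i hp hq
    obtain ⟨x, hx⟩ := (t.sub_shape p).1 hp
    obtain ⟨y, hy⟩ := (t.sub_shape _).1 hq
    have := t.ent_iff.1 ht.2.1 p [] i x y hx hy
    simpa [hx, hy] using (List.getElem?_eq_some_iff.1 this).1
  entry_eq := by
    intro p q r hp hq
    obtain ⟨x, hx⟩ := (t.sub_shape p).1 hp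
    obtain ⟨y, hy⟩ := (t.sub_shape _).1 hq
    simpa [hx, hy] using t.ent_iff.1 ht.2.1 p q r x y hx hy

theorem good_of_staircase (N : ℕ) (t : FT) (s : Staircase 2 N t.shape)
    (hN : t.shape.count = N)
    (hs : ∀ p (hp : t.shape.sub p ≠ KTree.nil), t.lookup p = some (s.lab ⟨p, hp⟩)) :
    Good (Finset.range N) ∅ 0 t := by
  have hs' : ∀ p x, t.lookup p = some x → ∃ hp, s.lab ⟨p, hp⟩ = x := by
    intro p x hx
    have hp := (t.sub_shape p).2 ⟨x, hx⟩
    exact ⟨hp, by simpa [hs p hp] using hx⟩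
  refine ⟨?_, ?_, by simp [Sat]⟩
  · have hnd : (t.labels.map List.length).Nodup := by
      rw [t.nodup_iff]
      intro p q x y hx hy hxy
      obtain ⟨hp, rfl⟩ := hs' p x hx
      obtain ⟨hq, rfl⟩ := hs' q y hy
      exact congrArg Subtype.val (s.length_inj hxy)
    refine Multiset.eq_of_le_of_card_le ((Multiset.le_iff_subset hnd).2 ?_) ?_
    · intro a ha
      obtain ⟨x, hx, rfl⟩ := Multiset.mem_map.1 ha
      obtain ⟨p, hp⟩ := (t.mem_labels x).1 hx
      obtain ⟨hp, rfl⟩ := hs' p x hp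
      simpa using s.length_lt _
    · simp [← hN, t.count_shape]
  · rw [t.ent_iff]
    intro p q r x y hx hy
    obtain ⟨hp, rfl⟩ := hs' p x hx
    obtain ⟨hq, rfl⟩ := hs' _ y hy
    exact s.entry_eq p q r hp hq

theorem Good.count_shape {N : ℕ} {t : FT} (ht : Good (Finset.range N) ∅ 0 t) :
    t.shape.count = N := by
  rw [t.count_shape, ht.card, Finset.card_range]

theorem card_staircase_eq_card_good (N : ℕ) (hN : 0 < N) :
    Nat.card ((T : {T : KTree 2 // KTree.count T = N ∧ KTree.IsComplete T}) ×
      Staircase 2 N T.val) = Nat.card {t : FT // Good (Finset.range N) ∅ 0 t} := by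
  classical
  symm
  let f : {t : FT // Good (Finset.range N) ∅ 0 t} →
      (T : {T : KTree 2 // KTree.count T = N ∧ KTree.IsComplete T}) × Staircase 2 N T.val :=
    fun t => ⟨⟨t.1.shape, t.2.count_shape, t.1.shape_isComplete⟩, t.1.toStaircase N t.2⟩
  -- The labels of a pair as a partial function on positions, whose type does not depend on the tree.
  let g : ((T : {T : KTree 2 // KTree.count T = N ∧ KTree.IsComplete T}) × Staircase 2 N T.val) →
      List (Fin 2) → Option (List (Fin 2)) :=
    fun x p => if h : x.1.1.sub p ≠ KTree.nil then some (x.2.lab ⟨p, h⟩) else none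
  have hgf : ∀ t, g (f t) = t.1.lookup := by
    intro t
    funext p
    by_cases h : t.1.shape.sub p ≠ KTree.nil
    · obtain ⟨x, hx⟩ := (t.1.sub_shape p).1 h
      simp only [g, f, dif_pos h, FT.toStaircase, hx, Option.getD_some]
    · have h' := h
      rw [t.1.sub_shape p, not_exists] at h'
      simp only [g, f, dif_neg h]
      exact (Option.eq_none_iff_forall_ne_some.2 h').symm
  refine Nat.card_congr (Equiv.ofBijective f ⟨?_, ?_⟩)
  · intro t t' h
    apply Subtype.ext
    apply FT.lookup_injective
    rw [← hgf, ← hgf, h]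
  · rintro ⟨⟨T, hT, hc⟩, s⟩
    have hne : T ≠ KTree.nil := by
      rintro rfl
      simp only [KTree.count] at hT
      omega
    obtain ⟨t, rfl, ht⟩ := FT.exists_of_complete T hne hc
      fun p => if h : T.sub p ≠ KTree.nil then s.lab ⟨p, h⟩ else []
    have hs : ∀ p (hp : t.shape.sub p ≠ KTree.nil), t.lookup p = some (s.lab ⟨p, hp⟩) := by
      intro p hp
      obtain ⟨x, hx⟩ := (t.sub_shape p).1 hp
      rw [hx, ht p x hx, dif_pos hp]
    refine ⟨⟨t, good_of_staircase N t s hT hs⟩, ?_⟩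
    refine Sigma.ext rfl (heq_of_eq (Staircase.lab_congr _ _ ?_))
    funext p
    change (t.lookup p.1).getD [] = s.lab p
    rw [hs p.1 p.2, Option.getD_some]

/-- The number of complete binary trees with `2n+1` vertices equipped with a
staircase labeling equals `2^((1+2+⋯+2n) - n) = 2^(2n²)`; equivalently,
exactly a `1/2^n` fraction of the `2^(1+2+⋯+2n)` staircase arrays in
`S(2n+1, 2)` correspond to complete binary trees. -/
theorem card_complete_staircase_labeled_trees (n : ℕ) (hn : 0 < n) :
    Nat.card ((T : {T : KTree 2 // KTree.count T = 2 * n + 1 ∧ KTree.IsComplete T}) ×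
        Staircase 2 (2 * n + 1) T.val)
      = 2 ^ (2 * n ^ 2) ∧
    2 ^ n *
        Nat.card ((T : {T : KTree 2 // KTree.count T = 2 * n + 1 ∧ KTree.IsComplete T}) ×
          Staircase 2 (2 * n + 1) T.val)
      = 2 ^ (∑ i ∈ Finset.range (2 * n + 1), i) := by
  obtain ⟨F, hF, hcard⟩ := exists_finset_good n (Finset.range (2 * n + 1)) ∅ 0 (by simp) (by simp)
  have hc : Nat.card ((T : {T : KTree 2 // KTree.count T = 2 * n + 1 ∧ KTree.IsComplete T}) ×
      Staircase 2 (2 * n + 1) T.val) = F.card := by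
    rw [card_staircase_eq_card_good _ (by omega)]
    exact Nat.subtype_card F hF
  have h2 : 2 ^ n * F.card = 2 ^ (∑ i ∈ Finset.range (2 * n + 1), i) := by
    rw [← hcard, Finset.card_empty, Nat.zero_mul, Nat.zero_add, Nat.mul_comm]
  rw [hc]
  refine ⟨?_, h2⟩
  have hsum : ∑ i ∈ Finset.range (2 * n + 1), i = n + 2 * n ^ 2 := by
    have := Finset.sum_range_id_mul_two (2 * n + 1)
    rw [Nat.add_sub_cancel] at this
    nlinarith
  rw [hsum, pow_add] at h2
  exact Nat.eq_of_mul_eq_mul_left (by positivity) h2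
end

section
/- For every positive integer n, the following two identities are equivalent: (i) the sum over all binary trees T with n vertices of 1/(∏_{h ∈ H(T)} (2h+1)·2^{2h-1}) equals 1/(2n+1)!; (ii) the sum over all complete binary trees T with 2n+1 vertices of 1/(∏_{h ∈ H(T)} h·2^{h-1}) equals 1/(2^n·(2n+1)!). The equivalence holds because the map attaching n+1 leaves to a binary tree with n vertices is a bijection onto complete binary trees with 2n+1 vertices under which the hook length multiset {h} transforms into {2h+1 : h ∈ H(T)} together with n+1 copies of 1. -/
namespace BinTree

theorem count_toComplete (T : BinTree) : T.toComplete.count = 2 * T.count + 1 := by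
  induction T with
  | leaf => rfl
  | node l r ihl ihr => simp only [toComplete, count, ihl, ihr]; ring

theorem toComplete_ne_leaf (T : BinTree) : T.toComplete ≠ leaf := by
  cases T <;> simp [toComplete]

theorem isComplete_toComplete (T : BinTree) : T.toComplete.IsComplete := by
  induction T with
  | leaf => simp [toComplete, IsComplete]
  | node l r ihl ihr =>
    exact ⟨Or.inr ⟨toComplete_ne_leaf l, toComplete_ne_leaf r⟩, ihl, ihr⟩

theorem toComplete_injective : Function.Injective toComplete := by
  intro S
  induction S with
  | leaf =>
    intro T h
    cases T with
    | leaf => rfl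
    | node l r =>
      simp only [toComplete, node.injEq] at h
      exact absurd h.1.symm (toComplete_ne_leaf l)
  | node l r ihl ihr =>
    intro T h
    cases T with
    | leaf =>
      simp only [toComplete, node.injEq] at h
      exact absurd h.1 (toComplete_ne_leaf l)
    | node l' r' =>
      simp only [toComplete, node.injEq] at h
      rw [ihl h.1, ihr h.2]

/-- The preimage is obtained by deleting all childless vertices. The empty tree counts as complete
but is not in the image, so it is excluded. -/
theorem exists_toComplete (T : BinTree) (hT : T.IsComplete) (hne : T ≠ leaf) :
    ∃ S : BinTree, S.toComplete = T := by
  induction T with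
  | leaf => exact absurd rfl hne
  | node l r ihl ihr =>
    obtain ⟨h, hl, hr⟩ := hT
    rcases h with ⟨rfl, rfl⟩ | ⟨hl', hr'⟩
    · exact ⟨leaf, rfl⟩
    · obtain ⟨L, rfl⟩ := ihl hl hl'
      obtain ⟨R, rfl⟩ := ihr hr hr'
      exact ⟨node L R, rfl⟩

theorem bijOn_toComplete (n : ℕ) :
    Set.BijOn toComplete {T : BinTree | T.count = n}
      {T : BinTree | T.count = 2 * n + 1 ∧ T.IsComplete} := by
  refine ⟨?_, toComplete_injective.injOn, ?_⟩
  · rintro T rfl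
    exact ⟨count_toComplete T, isComplete_toComplete T⟩
  · rintro T ⟨hc, hT⟩
    obtain ⟨S, rfl⟩ := exists_toComplete T hT (by rintro rfl; simp [count] at hc)
    rw [count_toComplete] at hc
    exact ⟨S, by simp only [Set.mem_ofPred_eq]; omega, rfl⟩

theorem hooks_toComplete (T : BinTree) :
    T.toComplete.hooks
      = T.hooks.map (fun h => 2 * h + 1) + Multiset.replicate (T.count + 1) 1 := by
  induction T with
  | leaf => simp [toComplete, hooks, count]
  | node l r ihl ihr =>
    have hroot : 2 * l.count + 1 + (2 * r.count + 1) + 1 = 2 * (l.count + r.count + 1) + 1 := by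
      ring
    have hleaves : l.count + r.count + 1 + 1 = (l.count + 1) + (r.count + 1) := by ring
    simp only [toComplete, hooks, count, ihl, ihr, count_toComplete, Multiset.map_cons,
      Multiset.map_add, hroot]
    rw [hleaves, Multiset.replicate_add (l.count + 1) (r.count + 1), Multiset.cons_add,
      add_add_add_comm]

theorem card_hooks (T : BinTree) : T.hooks.card = T.count := by
  induction T with
  | leaf => rfl
  | node l r ihl ihr => simp [hooks, count, ihl, ihr]

theorem pos_of_mem_hooks (T : BinTree) {h : ℕ} (hh : h ∈ T.hooks) : 0 < h := by
  induction T with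
  | leaf => simp [hooks] at hh
  | node l r ihl ihr =>
    simp only [hooks, Multiset.mem_cons, Multiset.mem_add] at hh
    rcases hh with rfl | hh | hh
    · omega
    · exact ihl hh
    · exact ihr hh

theorem prod_hooks_toComplete (T : BinTree) :
    (T.toComplete.hooks.map fun h : ℕ => (h : ℚ) * (2 : ℚ) ^ (h - 1)).prod
      = 2 ^ T.count * (T.hooks.map fun h : ℕ =>
          ((2 * h + 1 : ℕ) : ℚ) * (2 : ℚ) ^ (2 * h - 1)).prod := by
  rw [hooks_toComplete, Multiset.map_add, Multiset.prod_add, Multiset.map_map,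
    Multiset.map_replicate, Multiset.prod_replicate, ← card_hooks,
    ← Multiset.prod_replicate T.hooks.card, ← Multiset.map_const', ← Multiset.prod_map_mul]
  simp only [Nat.cast_one, Nat.sub_self, pow_zero, mul_one, one_pow]
  congr 1
  refine Multiset.map_congr rfl fun h hh => ?_
  -- positivity of `h` makes the truncated subtraction `2 * h - 1` harmless
  obtain ⟨k, rfl⟩ := Nat.exists_eq_succ_of_ne_zero (pos_of_mem_hooks T hh).ne'
  have hk : 2 * (k + 1) - 1 = 2 * k + 1 := by omega
  simp only [Function.comp_apply, Nat.succ_eq_add_one, Nat.add_sub_cancel, hk]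
  ring

end BinTree

/-- For every positive integer `n`, the identity
(i) `∑_{T ∈ B_n} 1 / ∏_{h ∈ H(T)} ((2h+1) · 2^(2h-1)) = 1 / (2n+1)!`
is equivalent to the identity
(ii) `∑_{T ∈ B^c_{2n+1}} 1 / ∏_{h ∈ H(T)} (h · 2^(h-1)) = 1 / (2^n · (2n+1)!)`.
The equivalence holds because attaching `n+1` leaves to a binary tree with `n`
vertices is a bijection onto complete binary trees with `2n+1` vertices, under
which the hook length multiset `H(T)` transforms into
`{2h+1 : h ∈ H(T)}` together with `n+1` copies of `1`. -/
theorem han_second_equiv_complete_form (n : ℕ) (hn : 0 < n) :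
    Set.BijOn BinTree.toComplete {T : BinTree | T.count = n}
      {T : BinTree | T.count = 2 * n + 1 ∧ T.IsComplete} ∧
    (∀ T : BinTree, T.count = n →
      BinTree.hooks T.toComplete
        = (BinTree.hooks T).map (fun h => 2 * h + 1) + Multiset.replicate (n + 1) 1) ∧
    ((∑ᶠ T ∈ {T : BinTree | T.count = n},
        (1 : ℚ) / ((BinTree.hooks T).map fun h : ℕ =>
          ((2 * h + 1 : ℕ) : ℚ) * (2 : ℚ) ^ (2 * h - 1)).prod
        = 1 / (2 * n + 1).factorial) ↔
      (∑ᶠ T ∈ {T : BinTree | T.count = 2 * n + 1 ∧ T.IsComplete},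
        (1 : ℚ) / ((BinTree.hooks T).map fun h : ℕ => (h : ℚ) * (2 : ℚ) ^ (h - 1)).prod
        = 1 / ((2 : ℚ) ^ n * (2 * n + 1).factorial))) := by
  refine ⟨BinTree.bijOn_toComplete n, ?_, ?_⟩
  · rintro T rfl
    exact BinTree.hooks_toComplete T
  · have hsum : ∑ᶠ T ∈ {T : BinTree | T.count = 2 * n + 1 ∧ T.IsComplete},
        (1 : ℚ) / ((BinTree.hooks T).map fun h : ℕ => (h : ℚ) * (2 : ℚ) ^ (h - 1)).prod
        = ((2 : ℚ) ^ n)⁻¹ * ∑ᶠ T ∈ {T : BinTree | T.count = n},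
        (1 : ℚ) / ((BinTree.hooks T).map fun h : ℕ =>
          ((2 * h + 1 : ℕ) : ℚ) * (2 : ℚ) ^ (2 * h - 1)).prod := by
      -- as a scalar action, a constant factors out of `finsum` without a finiteness proof
      rw [← smul_eq_mul (((2 : ℚ) ^ n)⁻¹)]
      simp only [smul_finsum]
      refine (finsum_mem_eq_of_bijOn _ (BinTree.bijOn_toComplete n) ?_).symm
      rintro T rfl
      rw [BinTree.prod_hooks_toComplete, smul_eq_mul, one_div, one_div, mul_inv]
    have h2 : ((2 : ℚ) ^ n)⁻¹ ≠ 0 := by positivity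
    rw [hsum, one_div ((2 : ℚ) ^ n * _), mul_inv, mul_right_inj' h2, one_div]
end
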